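/- arXiv:2403.05865 — 2 statements merged into one kernel-verified Lean document; each statement's English description precedes it below -/
import Mathlib

section
/- Let a : ℝ × ℝⁿ → ℝ and z : ℝ × ℝⁿ → ℝ be smooth and ℤⁿ-periodic in the second variable, with a > 0, let P : ℝ → ℝⁿ be smooth, and set u(τ,x) = P(τ)·x + z(τ,x). Let W be smooth ℤⁿ-periodic and V ∈ ℝⁿ, and assume for every τ ∈ (−1,1): ∫ a(τ,·)² dx = 1, div_x(a(τ,·)² D u(τ,·)) = 0, and ∫ a(τ,·)² D u(τ,·) dx = V. Assume moreover that at τ = 0 the eigenvalue equation (ħ²/2)Δa = a(|Du|²/2 + W − E) holds for some E ∈ ℝ, where a = a(0,·), u = u(0,·). Define j(τ) = ∫ ( −(ħ²/2)|D a(τ,·)|² + (a(τ,·)²/2)|D u(τ,·)|² − W a(τ,·)² ) dx. Then j is twice differentiable at τ = 0 and j''(0) = ∫ ( −ħ²|Da'|² + a²|Du'|² − 2(a')²(|Du|²/2 + W − E) ) dx, where a' and u' denote the partial derivatives in τ at τ = 0. -/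
/-!
Write `'` for `∂_τ` at `τ = 0` and `L = -(ħ²/2)|Da|² + (a²/2)|Du|² - W a²` for the Lagrangian
density.  All data are jointly smooth and the cube is compact, so `j''(0) = ∫ L''`
(`JointSmooth.hasDerivAt_integral`).  A computation gives, pointwise,

  `L'' = R + (a² Du · Du₀)'' - ħ² div (a'' Da) - E (a²)''`,

where `R` is the claimed integrand and `Du₀` is the gradient of the phase at `τ = 0`, held fixed;
the eigenvalue equation is used to replace `(ħ²/2) Δa`.  The three remaining terms integrate to
zero:

* `∫ a² Du · Du₀ = P(0) · V` does not depend on `τ`, because `a² Du` is divergence free with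
  integral `V` and `u₀` is affine plus periodic (`integral_flux_pairing`);
* the integral of the divergence of a periodic field vanishes (`integral_pd_eq_zero`), by the
  divergence theorem on the cube;
* `∫ a² = 1` does not depend on `τ`.

Integrals constant in `τ` have vanishing second derivative (`JointSmooth.integral_dt_dt_eq_zero`).
-/

open MeasureTheory

noncomputable section

/-- `ℝⁿ` with the Euclidean inner product. -/
abbrev En (n : ℕ) := EuclideanSpace ℝ (Fin n)

/-- The integer vector `k` viewed as a point of `ℝⁿ`. -/
def intVec {n : ℕ} (k : Fin n → ℤ) : En n :=
  (EuclideanSpace.equiv (Fin n) ℝ).symm (fun i => (k i : ℝ))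

/-- `ℤⁿ`-periodicity for scalar functions on `ℝⁿ`. -/
def IsPeriodic {n : ℕ} (f : En n → ℝ) : Prop :=
  ∀ (x : En n) (k : Fin n → ℤ), f (x + intVec k) = f x

/-- `ℤⁿ`-periodicity for vector fields on `ℝⁿ`. -/
def IsPeriodicV {n : ℕ} (F : En n → En n) : Prop :=
  ∀ (x : En n) (k : Fin n → ℤ), F (x + intVec k) = F x

/-- The unit cube `[0,1]ⁿ`, the fundamental domain of the torus. -/
def unitCube (n : ℕ) : Set (En n) := {x | ∀ i, x i ∈ Set.Icc (0:ℝ) 1}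

/-- Euclidean dot product. -/
def dot {n : ℕ} (x y : En n) : ℝ := ∑ i, x i * y i

/-- Partial derivative in the `i`-th coordinate direction. -/
def pd {n : ℕ} (i : Fin n) (f : En n → ℝ) (x : En n) : ℝ :=
  fderiv ℝ f x (EuclideanSpace.single i 1)

/-- The Laplacian of a scalar function. -/
def lap {n : ℕ} (f : En n → ℝ) (x : En n) : ℝ :=
  ∑ i, pd i (fun y => pd i f y) x

/-- The divergence of a vector field. -/
def dvg {n : ℕ} (F : En n → En n) (x : En n) : ℝ :=
  ∑ i, fderiv ℝ (fun y => F y i) x (EuclideanSpace.single i 1)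


section SecondVariation

variable {n : ℕ}

/-- Joint smoothness in `(τ, x)` of a one-parameter family of functions on `ℝⁿ`. -/
def JointSmooth (G : ℝ → En n → ℝ) : Prop :=
  ContDiff ℝ (⊤ : ℕ∞) (fun p : ℝ × En n => G p.1 p.2)

/-- The partial derivative in the parameter `τ`. -/
def dT (G : ℝ → En n → ℝ) (τ : ℝ) (x : En n) : ℝ := deriv (fun s => G s x) τ

/-- The partial derivative in the `i`-th space coordinate. -/
def dX (i : Fin n) (G : ℝ → En n → ℝ) (τ : ℝ) (x : En n) : ℝ := pd i (G τ) x

/-! ### Joint smoothness and calculus rules -/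

lemma gradient_apply (f : En n → ℝ) (x : En n) (i : Fin n) : gradient f x i = pd i f x := by
  have h : inner ℝ (gradient f x) (EuclideanSpace.single i (1 : ℝ)) = pd i f x := by
    simp [gradient, pd, InnerProductSpace.toDual_symm_apply]
  rw [← h, EuclideanSpace.inner_single_right]
  simp

lemma dot_gradient (f : En n → ℝ) (x : En n) :
    dot (gradient f x) (gradient f x) = ∑ i, pd i f x * pd i f x := by
  simp only [dot, gradient_apply]

namespace JointSmooth

variable {G H : ℝ → En n → ℝ}

lemma differentiable (hG : JointSmooth G) :
    Differentiable ℝ (fun p : ℝ × En n => G p.1 p.2) :=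
  ContDiff.differentiable hG (by simp)

lemma dt_eq (hG : JointSmooth G) (τ : ℝ) (x : En n) :
    dT G τ x = fderiv ℝ (fun p : ℝ × En n => G p.1 p.2) (τ, x) (1, 0) := by
  have h1 : HasDerivAt (fun s : ℝ => (s, x)) ((1 : ℝ), (0 : En n)) τ :=
    (hasDerivAt_id τ).prodMk (hasDerivAt_const τ x)
  have h := (hG.differentiable (τ, x)).hasFDerivAt.comp_hasDerivAt τ h1
  exact h.deriv

lemma dx_eq (hG : JointSmooth G) (i : Fin n) (τ : ℝ) (x : En n) :
    dX i G τ x = fderiv ℝ (fun p : ℝ × En n => G p.1 p.2) (τ, x)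
      (0, EuclideanSpace.single i 1) := by
  have h1 : HasFDerivAt (fun y : En n => (τ, y)) (ContinuousLinearMap.inr ℝ ℝ (En n)) x :=
    hasFDerivAt_prodMk_right τ x
  have h : HasFDerivAt (G τ) _ x := (hG.differentiable (τ, x)).hasFDerivAt.comp x h1
  rw [dX, pd, h.fderiv]
  simp

lemma fderiv_apply (hG : JointSmooth G) (v : ℝ × En n) :
    ContDiff ℝ (⊤ : ℕ∞) (fun p : ℝ × En n => fderiv ℝ (fun p : ℝ × En n => G p.1 p.2) p v) :=
  (ContDiff.fderiv_right (m := (⊤ : ℕ∞)) hG (by simp)).clm_apply contDiff_const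

lemma dt (hG : JointSmooth G) : JointSmooth (dT G) := by
  have h := hG.fderiv_apply (1, 0)
  unfold JointSmooth
  simpa only [hG.dt_eq] using h

lemma dx (hG : JointSmooth G) (i : Fin n) : JointSmooth (dX i G) := by
  have h := hG.fderiv_apply (0, EuclideanSpace.single i 1)
  unfold JointSmooth
  simpa only [hG.dx_eq] using h

lemma hasDerivAt (hG : JointSmooth G) (τ : ℝ) (x : En n) :
    HasDerivAt (fun s => G s x) (dT G τ x) τ := by
  have h : Differentiable ℝ (fun s => G s x) :=
    hG.differentiable.comp (differentiable_id.prodMk (differentiable_const x))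
  exact (h τ).hasDerivAt

/-- Symmetry of second derivatives: `∂_τ ∂_i = ∂_i ∂_τ`. -/
lemma dt_dx (hG : JointSmooth G) (i : Fin n) :
    dT (dX i G) = dX i (dT G) := by
  funext τ x
  rw [(hG.dx i).dt_eq, hG.dt.dx_eq]
  simp only [hG.dt_eq, hG.dx_eq]
  have hd : DifferentiableAt ℝ (fderiv ℝ (fun p : ℝ × En n => G p.1 p.2)) (τ, x) :=
    (ContDiff.fderiv_right (m := (⊤ : ℕ∞)) hG (by simp)).differentiable (by simp) _
  rw [show (fun p : ℝ × En n => fderiv ℝ (fun p : ℝ × En n => G p.1 p.2) (p.1, p.2)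
      (0, EuclideanSpace.single i 1)) = fun p => fderiv ℝ (fun p : ℝ × En n => G p.1 p.2) p
      (0, EuclideanSpace.single i 1) from rfl,
    show (fun p : ℝ × En n => fderiv ℝ (fun p : ℝ × En n => G p.1 p.2) (p.1, p.2)
      (1, 0)) = fun p => fderiv ℝ (fun p : ℝ × En n => G p.1 p.2) p (1, 0) from rfl,
    fderiv_clm_apply hd (differentiableAt_const _), fderiv_clm_apply hd (differentiableAt_const _)]
  have hs : IsSymmSndFDerivAt ℝ (fun p : ℝ × En n => G p.1 p.2) (τ, x) :=
    (ContDiff.contDiffAt hG).isSymmSndFDerivAt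
      (by
        rw [minSmoothness_of_isRCLikeNormedField]
        exact WithTop.coe_le_coe.2 (le_top : (2 : ℕ∞) ≤ ⊤))
  simpa using hs (1, 0) (0, EuclideanSpace.single i 1)

lemma mul (hG : JointSmooth G) (hH : JointSmooth H) :
    JointSmooth (fun τ x => G τ x * H τ x) := ContDiff.mul hG hH

lemma add (hG : JointSmooth G) (hH : JointSmooth H) :
    JointSmooth (fun τ x => G τ x + H τ x) := ContDiff.add hG hH

lemma sub (hG : JointSmooth G) (hH : JointSmooth H) :
    JointSmooth (fun τ x => G τ x - H τ x) := ContDiff.sub hG hH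

lemma sum {F : Fin n → ℝ → En n → ℝ} (hF : ∀ i, JointSmooth (F i)) :
    JointSmooth (fun τ x => ∑ i, F i τ x) := ContDiff.sum fun i _ => hF i

lemma const {f : En n → ℝ} (hf : ContDiff ℝ (⊤ : ℕ∞) f) : JointSmooth (fun _ x => f x) :=
  hf.comp contDiff_snd

lemma slice (hG : JointSmooth G) (τ : ℝ) : ContDiff ℝ (⊤ : ℕ∞) (G τ) :=
  ContDiff.comp (g := fun p : ℝ × En n => G p.1 p.2) hG (contDiff_const.prodMk contDiff_id)

lemma dt_mul (hG : JointSmooth G) (hH : JointSmooth H) :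
    dT (fun τ x => G τ x * H τ x)
      = fun τ x => dT G τ x * H τ x + G τ x * dT H τ x := by
  funext τ x
  exact ((hG.hasDerivAt τ x).mul (hH.hasDerivAt τ x)).deriv

lemma dt_add (hG : JointSmooth G) (hH : JointSmooth H) :
    dT (fun τ x => G τ x + H τ x) = fun τ x => dT G τ x + dT H τ x := by
  funext τ x
  exact ((hG.hasDerivAt τ x).add (hH.hasDerivAt τ x)).deriv

lemma dt_sub (hG : JointSmooth G) (hH : JointSmooth H) :
    dT (fun τ x => G τ x - H τ x) = fun τ x => dT G τ x - dT H τ x := by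
  funext τ x
  exact ((hG.hasDerivAt τ x).sub (hH.hasDerivAt τ x)).deriv

lemma dt_const_mul (hG : JointSmooth G) (f : En n → ℝ) :
    dT (fun τ x => f x * G τ x) = fun τ x => f x * dT G τ x := by
  funext τ x
  exact ((hG.hasDerivAt τ x).const_mul (f x)).deriv

lemma dt_sum {F : Fin n → ℝ → En n → ℝ} (hF : ∀ i, JointSmooth (F i)) :
    dT (fun τ x => ∑ i, F i τ x) = fun τ x => ∑ i, dT (F i) τ x := by
  funext τ x
  exact (HasDerivAt.fun_sum fun i _ => (hF i).hasDerivAt τ x).deriv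

end JointSmooth

lemma pd_mul {f g : En n → ℝ} (hf : ContDiff ℝ (⊤ : ℕ∞) f) (hg : ContDiff ℝ (⊤ : ℕ∞) g)
    (i : Fin n) (x : En n) :
    pd i (fun y => f y * g y) x = pd i f x * g x + f x * pd i g x := by
  have h := ((hf.differentiable (by simp) x).hasFDerivAt.mul
    (hg.differentiable (by simp) x).hasFDerivAt).fderiv
  have h' : fderiv ℝ (fun y => f y * g y) x = _ := h
  rw [pd, h']
  simp [pd]
  ring

lemma contDiff_pd {f : En n → ℝ} (hf : ContDiff ℝ (⊤ : ℕ∞) f) (i : Fin n) :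
    ContDiff ℝ (⊤ : ℕ∞) (pd i f) :=
  (hf.fderiv_right (m := (⊤ : ℕ∞)) (by simp)).clm_apply contDiff_const

lemma IsPeriodic.pd {f : En n → ℝ} (hf : IsPeriodic f) (i : Fin n) : IsPeriodic (pd i f) := by
  intro x k
  have h : (fun y => f (y + intVec k)) = f := funext fun y => hf y k
  rw [_root_.pd, _root_.pd, ← fderiv_comp_add_right, h]

/-! ### Integration over the unit cube -/

lemma unitCube_eq : unitCube n = (WithLp.ofLp : En n → Fin n → ℝ) ⁻¹' Set.Icc 0 1 := by
  ext x
  simp only [unitCube, Set.mem_ofPred_eq, Set.mem_preimage, Set.mem_Icc, Pi.le_def, forall_and]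
  rfl

lemma isCompact_unitCube : IsCompact (unitCube n) := by
  rw [unitCube_eq]
  exact ((EuclideanSpace.equiv (Fin n) ℝ).toHomeomorph.isCompact_preimage).2 isCompact_Icc

lemma integrableOn_unitCube {F : Type*} [NormedAddCommGroup F] {f : En n → F}
    (hf : Continuous f) : IntegrableOn f (unitCube n) :=
  hf.continuousOn.integrableOn_compact isCompact_unitCube

lemma setIntegral_unitCube (f : En n → ℝ) :
    ∫ x in unitCube n, f x = ∫ x in Set.Icc (0 : Fin n → ℝ) 1, f (WithLp.toLp 2 x) := by
  have h := (PiLp.volume_preserving_toLp (Fin n)).setIntegral_preimage_emb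
    (MeasurableEquiv.toLp 2 (Fin n → ℝ)).measurableEmbedding f (unitCube n)
  rw [← h, unitCube_eq]
  rfl

/-- The integral over the torus of a partial derivative vanishes: in the divergence theorem on the
cube the contributions of opposite faces cancel. -/
lemma integral_pd_eq_zero {f : En n → ℝ} (hf : ContDiff ℝ (⊤ : ℕ∞) f) (hper : IsPeriodic f)
    (i : Fin n) : ∫ x in unitCube n, pd i f x = 0 := by
  obtain _ | m := n
  · exact i.elim0
  let T : (Fin (m + 1) → ℝ) →L[ℝ] En (m + 1) :=
    (EuclideanSpace.equiv (Fin (m + 1)) ℝ).symm.toContinuousLinearMap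
  let g : Fin (m + 1) → (Fin (m + 1) → ℝ) → ℝ := fun k x => if k = i then f (T x) else 0
  let g' : Fin (m + 1) → (Fin (m + 1) → ℝ) → (Fin (m + 1) → ℝ) →L[ℝ] ℝ :=
    fun k x => if k = i then (fderiv ℝ f (T x)).comp T else 0
  have hsum : ∀ x, ∑ k, g' k x (Pi.single k 1) = pd i f (T x) := by
    intro x
    rw [Finset.sum_eq_single i]
    · simp only [g', if_true, pd]
      rfl
    · intro k _ hk
      simp [g', hk]
    · simp
  have hcont : Continuous fun x => pd i f (T x) := (contDiff_pd hf i).continuous.comp T.continuous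
  have h := integral_divergence_of_hasFDerivAt_off_countable' (0 : Fin (m + 1) → ℝ) 1
    (fun _ => zero_le_one) g g' ∅ Set.countable_empty
    (by
      intro k
      by_cases hk : k = i
      · simp only [g, hk, if_true]
        exact (hf.continuous.comp T.continuous).continuousOn
      · simp only [g, hk, if_false]
        exact continuousOn_const)
    (by
      intro x _ k
      by_cases hk : k = i
      · simp only [g, g', hk, if_true]
        exact ((hf.differentiable (by simp)) (T x)).hasFDerivAt.comp x T.hasFDerivAt
      · simp only [g, g', hk, if_false]
        exact hasFDerivAt_const _ _)
    (by
      simp only [hsum]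
      exact hcont.continuousOn.integrableOn_compact isCompact_Icc)
  simp only [hsum] at h
  rw [setIntegral_unitCube]
  refine Eq.trans h (Finset.sum_eq_zero fun k _ => ?_)
  rw [sub_eq_zero]
  congr 1
  funext y
  by_cases hk : k = i
  · subst hk
    simp only [g, if_true]
    rw [← hper (T (k.insertNth ((0 : Fin (m + 1) → ℝ) k) y)) (Pi.single k 1)]
    congr 1
    ext l
    rcases eq_or_ne l k with rfl | hl
    · simp [T, intVec]
    · obtain ⟨l, rfl⟩ := Fin.exists_succAbove_eq hl
      simp [T, intVec, hl]
  · simp [g, hk]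

/-- Differentiation under the integral sign over the unit cube. -/
lemma JointSmooth.hasDerivAt_integral {G : ℝ → En n → ℝ} (hG : JointSmooth G) (τ : ℝ) :
    HasDerivAt (fun s => ∫ x in unitCube n, G s x) (∫ x in unitCube n, dT G τ x) τ := by
  obtain ⟨C, hC⟩ := ((isCompact_Icc (a := τ - 1) (b := τ + 1)).prod
    (isCompact_unitCube (n := n))).exists_bound_of_continuousOn
    (ContDiff.continuous hG.dt).continuousOn
  have hmeas : MeasurableSet (unitCube n) := isCompact_unitCube.measurableSet
  refine (hasDerivAt_integral_of_dominated_loc_of_deriv_le (bound := fun _ => C)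
    (F' := dT G) (Icc_mem_nhds (by linarith : τ - 1 < τ) (by linarith : τ < τ + 1)) ?_ ?_ ?_ ?_ ?_ ?_).2
  · exact Filter.Eventually.of_forall fun s => (hG.slice s).continuous.aestronglyMeasurable
  · exact integrableOn_unitCube (hG.slice τ).continuous
  · exact (hG.dt.slice τ).continuous.aestronglyMeasurable
  · exact (ae_restrict_iff' hmeas).2 (Filter.Eventually.of_forall fun x hx s hs =>
      hC (s, x) ⟨hs, hx⟩)
  · exact integrableOn_unitCube continuous_const
  · exact Filter.Eventually.of_forall fun x s _ => hG.hasDerivAt s x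

/-- A conserved integral has vanishing second variation. -/
lemma JointSmooth.integral_dt_dt_eq_zero {G : ℝ → En n → ℝ} (hG : JointSmooth G) {c : ℝ}
    (hc : ∀ τ ∈ Set.Ioo (-1 : ℝ) 1, ∫ x in unitCube n, G τ x = c) :
    ∫ x in unitCube n, dT (dT G) 0 x = 0 := by
  have key : ∀ {H : ℝ → En n → ℝ} (_ : JointSmooth H) {d : ℝ}
      (_ : ∀ τ ∈ Set.Ioo (-1 : ℝ) 1, ∫ x in unitCube n, H τ x = d),
      ∀ τ ∈ Set.Ioo (-1 : ℝ) 1, ∫ x in unitCube n, dT H τ x = 0 := by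
    intro H hH d hd τ hτ
    have hev : (fun s => ∫ x in unitCube n, H s x) =ᶠ[nhds τ] fun _ => d :=
      Filter.eventually_of_mem (isOpen_Ioo.mem_nhds hτ) hd
    exact (hH.hasDerivAt_integral τ).unique ((hasDerivAt_const τ d).congr_of_eventuallyEq hev)
  exact key hG.dt (key hG hc) 0 (by norm_num)

/-! ### The second variation -/

lemma JointSmooth.sum_sq {F : Fin n → ℝ → En n → ℝ} (hF : ∀ i, JointSmooth (F i)) :
    JointSmooth (fun τ x => ∑ i, F i τ x * F i τ x) :=
  JointSmooth.sum fun i => (hF i).mul (hF i)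

lemma JointSmooth.dT_sum_sq {F : Fin n → ℝ → En n → ℝ} (hF : ∀ i, JointSmooth (F i)) :
    dT (fun τ x => ∑ i, F i τ x * F i τ x) = fun τ x => 2 * ∑ i, dT (F i) τ x * F i τ x := by
  rw [JointSmooth.dt_sum fun i => (hF i).mul (hF i)]
  funext τ x
  rw [Finset.mul_sum]
  refine Finset.sum_congr rfl fun i _ => ?_
  rw [(hF i).dt_mul (hF i)]
  ring

lemma JointSmooth.dT_dT_sum_sq {F : Fin n → ℝ → En n → ℝ} (hF : ∀ i, JointSmooth (F i)) :
    dT (dT (fun τ x => ∑ i, F i τ x * F i τ x)) = fun τ x =>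
      2 * ∑ i, dT (dT (F i)) τ x * F i τ x + 2 * ∑ i, dT (F i) τ x * dT (F i) τ x := by
  have h : ∀ i, JointSmooth (fun τ x => dT (F i) τ x * F i τ x) := fun i => (hF i).dt.mul (hF i)
  rw [JointSmooth.dT_sum_sq hF, (JointSmooth.sum h).dt_const_mul (fun _ => 2),
    JointSmooth.dt_sum h]
  funext τ x
  rw [← mul_add, ← Finset.sum_add_distrib]
  congr 1
  refine Finset.sum_congr rfl fun i _ => ?_
  rw [(hF i).dt.dt_mul (hF i)]

lemma JointSmooth.dT_dT_mul {G H : ℝ → En n → ℝ} (hG : JointSmooth G) (hH : JointSmooth H) :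
    dT (dT (fun τ x => G τ x * H τ x)) = fun τ x =>
      dT (dT G) τ x * H τ x + 2 * (dT G τ x * dT H τ x) + G τ x * dT (dT H) τ x := by
  rw [hG.dt_mul hH, (hG.dt.mul hH).dt_add (hG.mul hH.dt), hG.dt.dt_mul hH, hG.dt_mul hH.dt]
  funext τ x
  ring

/-- Partial derivatives of the phase `p · x + f(x)`. -/
lemma pd_dot_add {f : En n → ℝ} (hf : ContDiff ℝ (⊤ : ℕ∞) f) (p : En n) (i : Fin n) (x : En n) :
    pd i (fun y => dot p y + f y) x = p i + pd i f x := by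
  have h1 : HasFDerivAt (fun y : En n => dot p y)
      (∑ k, p k • (EuclideanSpace.proj k : En n →L[ℝ] ℝ)) x := by
    refine HasFDerivAt.fun_sum fun k _ => ?_
    exact ((EuclideanSpace.proj k : En n →L[ℝ] ℝ).hasFDerivAt).const_mul (p k)
  rw [pd, (h1.fun_add (hf.differentiable (by simp) x).hasFDerivAt).fderiv]
  simp [pd]

/-- If the periodic field `B` is divergence free, with integral `V`, then its pairing with the
gradient of `p · x + f(x)`, `f` periodic, is `p · V`: the periodic part drops out after an
integration by parts. -/
lemma integral_flux_pairing {B : Fin n → En n → ℝ} (hB : ∀ i, ContDiff ℝ (⊤ : ℕ∞) (B i))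
    (hBper : ∀ i, IsPeriodic (B i)) (hdiv : ∀ x, ∑ i, pd i (B i) x = 0) {V : En n}
    (hV : ∀ i, ∫ x in unitCube n, B i x = V i) {f : En n → ℝ} (hf : ContDiff ℝ (⊤ : ℕ∞) f)
    (hfper : IsPeriodic f) (p : En n) :
    ∫ x in unitCube n, ∑ i, B i x * (p i + pd i f x) = dot p V := by
  have hpt : ∀ x, ∑ i, B i x * (p i + pd i f x)
      = ∑ i, (p i * B i x + pd i (fun y => B i y * f y) x) := by
    intro x
    have h : ∑ i, pd i (B i) x * f x = 0 := by rw [← Finset.sum_mul, hdiv, zero_mul]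
    rw [← add_zero (∑ i, B i x * (p i + pd i f x)), ← h, ← Finset.sum_add_distrib]
    refine Finset.sum_congr rfl fun i _ => ?_
    rw [pd_mul (hB i) hf]
    ring
  simp only [hpt]
  have hc1 : ∀ i, Continuous fun x => p i * B i x :=
    fun i => continuous_const.mul (hB i).continuous
  have hc2 : ∀ i, Continuous fun x => pd i (fun y => B i y * f y) x :=
    fun i => (contDiff_pd ((hB i).mul hf) i).continuous
  rw [integral_finsetSum _ fun i _ => integrableOn_unitCube ((hc1 i).fun_add (hc2 i)), dot]
  refine Finset.sum_congr rfl fun i _ => ?_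
  rw [integral_add (integrableOn_unitCube (hc1 i)) (integrableOn_unitCube (hc2 i)),
    integral_const_mul, hV, integral_pd_eq_zero ((hB i).mul hf) _ i, add_zero]
  intro x k
  simp only [hBper i x k, hfper x k]

end SecondVariation

/-- Theorem 3.1: expression for the second variation `j''(0)`
of the Guerra-Morato action along a family satisfying the constraints, at a
critical point. -/
theorem secondVariation_formula {n : ℕ} (hbar : ℝ) (h_hbar : 0 < hbar)
    (a z : ℝ → En n → ℝ) (P : ℝ → En n) (W : En n → ℝ) (V : En n) (E : ℝ)
    (ha : ContDiff ℝ (⊤ : ℕ∞) (fun p : ℝ × En n => a p.1 p.2))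
    (hz : ContDiff ℝ (⊤ : ℕ∞) (fun p : ℝ × En n => z p.1 p.2))
    (hP : ContDiff ℝ (⊤ : ℕ∞) P)
    (hapos : ∀ τ x, 0 < a τ x)
    (haper : ∀ τ, IsPeriodic (a τ)) (hzper : ∀ τ, IsPeriodic (z τ))
    (hW : ContDiff ℝ (⊤ : ℕ∞) W) (hWper : IsPeriodic W)
    (u : ℝ → En n → ℝ) (hu : u = fun τ x => dot (P τ) x + z τ x)
    (hnorm : ∀ τ ∈ Set.Ioo (-1 : ℝ) 1, (∫ x in unitCube n, (a τ x) ^ 2) = 1)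
    (htransport : ∀ τ ∈ Set.Ioo (-1 : ℝ) 1,
      ∀ x, dvg (fun y => (a τ y) ^ 2 • gradient (u τ) y) x = 0)
    (hmoment : ∀ τ ∈ Set.Ioo (-1 : ℝ) 1,
      (∫ x in unitCube n, (a τ x) ^ 2 • gradient (u τ) x) = V)
    (heig : ∀ x, hbar ^ 2 / 2 * lap (a 0) x
      = a 0 x * (dot (gradient (u 0) x) (gradient (u 0) x) / 2 + W x - E))
    (j : ℝ → ℝ)
    (hj : j = fun τ => ∫ x in unitCube n,
      (-(hbar ^ 2 / 2) * dot (gradient (a τ) x) (gradient (a τ) x)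
        + (a τ x) ^ 2 / 2 * dot (gradient (u τ) x) (gradient (u τ) x)
        - W x * (a τ x) ^ 2)) :
    DifferentiableAt ℝ j 0 ∧ DifferentiableAt ℝ (deriv j) 0 ∧
    deriv (deriv j) 0 = ∫ x in unitCube n,
      (-hbar ^ 2 * dot (gradient (fun y => deriv (fun τ => a τ y) 0) x)
                    (gradient (fun y => deriv (fun τ => a τ y) 0) x)
        + (a 0 x) ^ 2 * dot (gradient (fun y => deriv (fun τ => u τ y) 0) x)
                            (gradient (fun y => deriv (fun τ => u τ y) 0) x)
        - 2 * (deriv (fun τ => a τ x) 0) ^ 2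
            * (dot (gradient (u 0) x) (gradient (u 0) x) / 2 + W x - E)) := by
  have hA : JointSmooth a := ha
  have hU : JointSmooth u := by
    have h : ContDiff ℝ (⊤ : ℕ∞) (fun p : ℝ × En n => ∑ i, P p.1 i * p.2 i) := by
      refine ContDiff.sum fun i _ => ContDiff.mul ?_ ?_
      · exact (EuclideanSpace.proj i : En n →L[ℝ] ℝ).contDiff.comp (hP.comp contDiff_fst)
      · exact (EuclideanSpace.proj i : En n →L[ℝ] ℝ).contDiff.comp contDiff_snd
    rw [hu]
    exact h.add hz
  have hzs : ∀ τ, ContDiff ℝ (⊤ : ℕ∞) (z τ) := fun τ => JointSmooth.slice (G := z) hz τ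
  have hpu : ∀ τ i x, pd i (u τ) x = P τ i + pd i (z τ) x := by
    intro τ i x
    rw [hu]
    exact pd_dot_add (hzs τ) (P τ) i x
  have hAA := hA.mul hA
  have hSa : ∀ i, JointSmooth (dX i a) := fun i => hA.dx i
  have hSu : ∀ i, JointSmooth (dX i u) := fun i => hU.dx i
  have hSw : ∀ i, ContDiff ℝ (⊤ : ℕ∞) (dX i u 0) := fun i => (hSu i).slice 0
  -- The pairing of the current `a² Du` with the fixed covector field `Du(0, ·)`.
  have hpair : ∀ i, JointSmooth (fun τ x => dX i u 0 x * dX i u τ x) :=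
    fun i => (JointSmooth.const (hSw i)).mul (hSu i)
  have hJ := hAA.mul (JointSmooth.sum hpair)
  have hJconst : ∀ τ ∈ Set.Ioo (-1 : ℝ) 1, ∫ x in unitCube n,
      a τ x * a τ x * ∑ i, dX i u 0 x * dX i u τ x = dot (P 0) V := by
    intro τ hτ
    have hB : ∀ i, ContDiff ℝ (⊤ : ℕ∞) (fun x => a τ x * a τ x * dX i u τ x) :=
      fun i => (hAA.mul (hSu i)).slice τ
    have hcoord : ∀ x i, ((a τ x) ^ 2 • gradient (u τ) x) i = a τ x * a τ x * dX i u τ x := by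
      intro x i
      rw [PiLp.smul_apply, gradient_apply, smul_eq_mul, sq]
      rfl
    have hfield : Continuous fun x => (a τ x) ^ 2 • gradient (u τ) x := by
      refine (PiLp.continuous_toLp 2 _).comp (continuous_pi fun i => ?_)
      exact (hB i).continuous.congr fun x => (hcoord x i).symm
    rw [← integral_flux_pairing hB ?_ ?_ ?_ (hzs 0) (hzper 0) (P 0)]
    · congr 1
      funext x
      rw [Finset.mul_sum]
      refine Finset.sum_congr rfl fun i _ => ?_
      rw [← hpu 0 i x, dX, dX]
      ring
    · intro i x k
      simp only [dX, hpu, haper τ x k, (hzper τ).pd i x k]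
    · intro x
      have h := htransport τ hτ x
      simp only [dvg, hcoord] at h
      exact h
    · intro i
      rw [← hmoment τ hτ]
      have h := (EuclideanSpace.proj i : En n →L[ℝ] ℝ).integral_comp_comm
        (integrableOn_unitCube hfield)
      simp only [PiLp.proj_apply, hcoord] at h
      exact h
  have hJ0 := hJ.integral_dt_dt_eq_zero hJconst
  have hN0 : ∫ x in unitCube n, dT (dT fun τ x => a τ x * a τ x) 0 x = 0 :=
    hAA.integral_dt_dt_eq_zero (c := 1) fun τ hτ => by
      rw [← hnorm τ hτ]
      simp only [sq]
  -- The divergence of the periodic field `a'' Da`.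
  have hdiv_smooth : ∀ i, ContDiff ℝ (⊤ : ℕ∞) (fun y => dT (dT a) 0 y * pd i (a 0) y) :=
    fun i => (hA.dt.dt.slice 0).mul ((hSa i).slice 0)
  have hdiv_cont : ∀ i, Continuous fun x => pd i (fun y => dT (dT a) 0 y * pd i (a 0) y) x :=
    fun i => (contDiff_pd (hdiv_smooth i) i).continuous
  have hD0 : ∫ x in unitCube n, ∑ i, pd i (fun y => dT (dT a) 0 y * pd i (a 0) y) x = 0 := by
    rw [integral_finsetSum _ fun i _ => integrableOn_unitCube (hdiv_cont i)]
    refine Finset.sum_eq_zero fun i _ => integral_pd_eq_zero (hdiv_smooth i) ?_ i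
    intro x k
    have h : ∀ τ, dT a τ (x + intVec k) = dT a τ x := fun τ => by
      simp only [dT, haper _ x k]
    have h2 : dT (dT a) 0 (x + intVec k) = dT (dT a) 0 x := by
      rw [dT, dT]
      simp only [h]
    simp only [h2, (haper 0).pd i x k]
  -- The Lagrangian density and its first two variations.
  have hL1 := (JointSmooth.const (contDiff_const (c := -(hbar ^ 2 / 2)))).mul
    (JointSmooth.sum_sq hSa)
  have hL2' := hAA.mul (JointSmooth.sum_sq hSu)
  have hL2 := (JointSmooth.const (contDiff_const (c := (1 / 2 : ℝ)))).mul hL2'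
  have hL3 := (JointSmooth.const hW).mul hAA
  have hL := (hL1.add hL2).sub hL3
  have hjL : j = fun τ => ∫ x in unitCube n,
      (-(hbar ^ 2 / 2) * (∑ i, dX i a τ x * dX i a τ x)
        + 1 / 2 * (a τ x * a τ x * ∑ i, dX i u τ x * dX i u τ x) - W x * (a τ x * a τ x)) := by
    rw [hj]
    funext τ
    congr 1
    funext x
    rw [dot_gradient, dot_gradient]
    simp only [dX]
    ring
  have hd1 := fun τ => hL.hasDerivAt_integral τ
  have hd2 := hL.dt.hasDerivAt_integral 0
  rw [← hjL] at hd1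
  have hderiv : deriv j = _ := funext fun τ => (hd1 τ).deriv
  refine ⟨(hd1 0).differentiableAt, hderiv ▸ hd2.differentiableAt, ?_⟩
  rw [hderiv, hd2.deriv]
  have hdta : ∀ i x, pd i (fun y => deriv (fun τ => a τ y) 0) x = dT (dX i a) 0 x := by
    intro i x
    rw [hA.dt_dx]
    rfl
  have hdtu : ∀ i x, pd i (fun y => deriv (fun τ => u τ y) 0) x = dT (dX i u) 0 x := by
    intro i x
    rw [hU.dt_dx]
    rfl
  simp only [dot_gradient, hdta, hdtu]
  have hda : ∀ x, deriv (fun τ => a τ x) 0 = dT a 0 x := fun _ => rfl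
  simp only [hda]
  -- Pointwise, the second variation of the density differs from the claimed integrand by
  -- multiples of the three densities above, each with integral zero.
  have hpt : ∀ x, dT (dT fun τ x => -(hbar ^ 2 / 2) * (∑ i, dX i a τ x * dX i a τ x)
        + 1 / 2 * (a τ x * a τ x * ∑ i, dX i u τ x * dX i u τ x) - W x * (a τ x * a τ x)) 0 x
      = (-hbar ^ 2 * ∑ i, dT (dX i a) 0 x * dT (dX i a) 0 x
          + a 0 x ^ 2 * ∑ i, dT (dX i u) 0 x * dT (dX i u) 0 x
          - 2 * dT a 0 x ^ 2 * ((∑ i, pd i (u 0) x * pd i (u 0) x) / 2 + W x - E))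
        + (dT (dT fun τ x => a τ x * a τ x * ∑ i, dX i u 0 x * dX i u τ x) 0 x
          + (-hbar ^ 2 * (∑ i, pd i (fun y => dT (dT a) 0 y * pd i (a 0) y) x)
            + -E * dT (dT fun τ x => a τ x * a τ x) 0 x)) := by
    intro x
    have e := heig x
    have hdivx : ∑ i, pd i (fun y => dT (dT a) 0 y * pd i (a 0) y) x
        = ∑ i, dT (dT (dX i a)) 0 x * dX i a 0 x + dT (dT a) 0 x * lap (a 0) x := by
      rw [lap, Finset.mul_sum, ← Finset.sum_add_distrib]
      refine Finset.sum_congr rfl fun i _ => ?_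
      rw [pd_mul (g := pd i (a 0)) (hA.dt.dt.slice 0) ((hSa i).slice 0), hA.dt_dx, hA.dt.dt_dx]
      rfl
    have hpairsum : dT (fun τ x => ∑ i, dX i u 0 x * dX i u τ x)
        = fun τ x => ∑ i, dX i u 0 x * dT (dX i u) τ x := by
      rw [JointSmooth.dt_sum hpair]
      funext τ x
      exact Finset.sum_congr rfl fun i _ => by rw [(hSu i).dt_const_mul]
    have hpairsum2 : dT (fun τ x => ∑ i, dX i u 0 x * dT (dX i u) τ x)
        = fun τ x => ∑ i, dX i u 0 x * dT (dT (dX i u)) τ x := by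
      rw [JointSmooth.dt_sum fun i => (JointSmooth.const (hSw i)).mul (hSu i).dt]
      funext τ x
      exact Finset.sum_congr rfl fun i _ => by rw [(hSu i).dt.dt_const_mul]
    rw [(hL1.add hL2).dt_sub hL3, (hL1.add hL2).dt.dt_sub hL3.dt, hL1.dt_add hL2,
      hL1.dt.dt_add hL2.dt,
      (JointSmooth.sum_sq hSa).dt_const_mul (fun _ => -(hbar ^ 2 / 2)),
      (JointSmooth.sum_sq hSa).dt.dt_const_mul (fun _ => -(hbar ^ 2 / 2)),
      hL2'.dt_const_mul (fun _ => 1 / 2), hL2'.dt.dt_const_mul (fun _ => 1 / 2),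
      hAA.dt_const_mul W, hAA.dt.dt_const_mul W, JointSmooth.dT_dT_sum_sq hSa,
      hAA.dT_dT_mul (JointSmooth.sum_sq hSu), JointSmooth.dT_dT_sum_sq hSu,
      JointSmooth.dT_sum_sq hSu, hAA.dT_dT_mul (JointSmooth.sum hpair), hpairsum, hpairsum2,
      hA.dT_dT_mul hA, hA.dt_mul hA, hdivx]
    rw [dot_gradient] at e
    simp only [mul_comm (dX _ u 0 x)]
    simp only [show ∀ i, pd i (u 0) x = dX i u 0 x from fun _ => rfl] at e ⊢
    linear_combination 2 * dT (dT a) 0 x * e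
  simp only [hpt]
  have hcR : Continuous fun x => (-hbar ^ 2 * ∑ i, dT (dX i a) 0 x * dT (dX i a) 0 x
      + a 0 x ^ 2 * ∑ i, dT (dX i u) 0 x * dT (dX i u) 0 x
      - 2 * dT a 0 x ^ 2 * ((∑ i, pd i (u 0) x * pd i (u 0) x) / 2 + W x - E)) := by
    have h1 := (hA.slice 0).continuous
    have h2 := (hA.dt.slice 0).continuous
    have h3 := fun i => ((hSa i).dt.slice 0).continuous
    have h4 := fun i => ((hSu i).dt.slice 0).continuous
    have h5 : ∀ i, Continuous (pd i (u 0)) := fun i => (hSw i).continuous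
    have h6 := hW.continuous
    fun_prop
  have hcJ := (hJ.dt.dt.slice 0).continuous
  have hcD : Continuous fun x =>
      -hbar ^ 2 * (∑ i, pd i (fun y => dT (dT a) 0 y * pd i (a 0) y) x) :=
    continuous_const.mul (continuous_finsetSum _ fun i _ => hdiv_cont i)
  have hcN : Continuous fun x => -E * dT (dT fun τ x => a τ x * a τ x) 0 x :=
    continuous_const.mul (hAA.dt.dt.slice 0).continuous
  rw [integral_add (integrableOn_unitCube hcR)
      (integrableOn_unitCube (hcJ.fun_add (hcD.fun_add hcN))),
    integral_add (integrableOn_unitCube hcJ) (integrableOn_unitCube (hcD.fun_add hcN)),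
    integral_add (integrableOn_unitCube hcD) (integrableOn_unitCube hcN),
    integral_const_mul, integral_const_mul, hJ0, hD0, hN0]
  ring
end
end

section
/- Let ħ > 0, P ∈ ℝⁿ, W smooth ℤⁿ-periodic, E ∈ ℝ, and let w, w* : ℝⁿ → ℝ be smooth, ℤⁿ-periodic and strictly positive, satisfying −(ħ²/2)Δw + ħ P·Dw + W w = E w and −(ħ²/2)Δw* − ħ P·Dw* + W w* = E w* on ℝⁿ. Set σ = w w*, v = −ħ log w, v* = ħ log w*, and u(x) = P·x + (v(x) + v*(x))/2. Then the transport (continuity) equation div(σ Du) = 0 holds on ℝⁿ. -/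
/-!
Since `σ Dv = -ħ w* Dw` and `σ Dv* = ħ w Dw*`, the flux is
`σ Du = σ P + (ħ/2) (w Dw* - w* Dw)` (`flux_apply`), free of logarithms. In its divergence the
terms `Dw · Dw*` cancel, leaving `P · D(w w*) + (ħ/2) (w Δw* - w* Δw)`. Multiplying the
equation of `w` by `w*`, that of `w*` by `w`, and subtracting shows that `ħ` times this
expression vanishes.
-/

open MeasureTheory

noncomputable section

lemma gradient_apply_eq_pd {n : ℕ} (f : En n → ℝ) (x : En n) (i : Fin n) :
    gradient f x i = pd i f x := by
  have h : inner ℝ (gradient f x) (EuclideanSpace.single i (1 : ℝ)) = pd i f x := by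
    unfold gradient pd
    exact InnerProductSpace.toDual_symm_apply
  rw [← h, EuclideanSpace.inner_single_right]
  simp

lemma hasFDerivAt_dot {n : ℕ} (P x : En n) :
    HasFDerivAt (fun y => dot P y) (innerSL ℝ P) x := by
  have h : (fun y => dot P y) = fun y => innerSL ℝ P y := by
    funext y
    simp [dot, PiLp.inner_apply, mul_comm]
  rw [h]
  exact (innerSL ℝ P).hasFDerivAt

lemma differentiable_pd {n : ℕ} {f : En n → ℝ} (hf : ContDiff ℝ (⊤ : ℕ∞) f) (i : Fin n) :
    Differentiable ℝ (fun y => pd i f y) := by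
  have h : ContDiff ℝ 1 (fderiv ℝ f) :=
    hf.fderiv_right (by norm_cast)
  exact (h.clm_apply contDiff_const).differentiable one_ne_zero

/-- The `i`-th component of `σ Du`: weighting by `σ = f g` clears the denominators that come
from differentiating the logarithms. -/
lemma flux_apply {n : ℕ} (c : ℝ) (P : En n) {f g : En n → ℝ}
    (hf : Differentiable ℝ f) (hg : Differentiable ℝ g)
    (hfpos : ∀ x, 0 < f x) (hgpos : ∀ x, 0 < g x) (x : En n) (i : Fin n) :
    ((f x * g x) • gradient (fun y => dot P y +
        (-(c * Real.log (f y)) + c * Real.log (g y)) / 2) x) i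
      = f x * g x * P i + c / 2 * (f x * pd i g x - g x * pd i f x) := by
  have hfx := (hfpos x).ne'
  have hgx := (hgpos x).ne'
  have hd := (hasFDerivAt_dot P x).add
    (((((hf x).hasFDerivAt.log hfx).const_mul c).neg.add
      (((hg x).hasFDerivAt.log hgx).const_mul c)).mul_const (2⁻¹ : ℝ))
  have hpd : pd i (fun y => dot P y +
      (-(c * Real.log (f y)) + c * Real.log (g y)) / 2) x
      = P i + (-(c * ((f x)⁻¹ * pd i f x)) + c * ((g x)⁻¹ * pd i g x)) / 2 := by
    have hd' := congrArg (fun L => L (EuclideanSpace.single i (1 : ℝ))) hd.fderiv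
    simp [EuclideanSpace.inner_single_right] at hd'
    unfold pd
    simp only [div_eq_mul_inv]
    refine Eq.trans hd' ?_
    ring
  rw [PiLp.smul_apply, gradient_apply_eq_pd, hpd, smul_eq_mul]
  field_simp
  ring

/-- The products `Dᵢf Dᵢg` cancel by antisymmetry of `f Dᵢg - g Dᵢf`. -/
lemma pd_flux {n : ℕ} (c p : ℝ) {f g : En n → ℝ}
    (hf : ContDiff ℝ (⊤ : ℕ∞) f) (hg : ContDiff ℝ (⊤ : ℕ∞) g) (x : En n) (i : Fin n) :
    fderiv ℝ (fun y => f y * g y * p + c / 2 * (f y * pd i g y - g y * pd i f y)) x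
        (EuclideanSpace.single i 1)
      = g x * (p * pd i f x) + f x * (p * pd i g x)
        + c / 2 * (f x * pd i (fun y => pd i g y) x - g x * pd i (fun y => pd i f y) x) := by
  have hfd := ((hf.differentiable (by simp)) x).hasFDerivAt
  have hgd := ((hg.differentiable (by simp)) x).hasFDerivAt
  have hfd2 := (differentiable_pd hf i x).hasFDerivAt
  have hgd2 := (differentiable_pd hg i x).hasFDerivAt
  have hd := ((hfd.mul hgd).mul_const p).add
    (((hfd.mul hgd2).sub (hgd.mul hfd2)).const_mul (c / 2))
  refine (congrArg (fun L => L (EuclideanSpace.single i (1 : ℝ))) hd.fderiv).trans ?_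
  simp only [ContinuousLinearMap.add_apply, ContinuousLinearMap.sub_apply,
    ContinuousLinearMap.smul_apply, smul_eq_mul]
  unfold pd
  ring

/-- Theorem 5.1(i): the transport (continuity) equation
`div(σ Du) = 0` for `σ = w w*` and `u = P·x + (v+v*)/2` coming from the dual
eigenvalue problems via the Cole-Hopf transformation. -/
theorem transport_equation {n : ℕ} (hbar : ℝ) (h_hbar : 0 < hbar) (P : En n)
    (W : En n → ℝ) (hW : ContDiff ℝ (⊤ : ℕ∞) W) (hWper : IsPeriodic W) (E : ℝ)
    (w wstar : En n → ℝ)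
    (hw : ContDiff ℝ (⊤ : ℕ∞) w) (hwper : IsPeriodic w) (hwpos : ∀ x, 0 < w x)
    (hwstar : ContDiff ℝ (⊤ : ℕ∞) wstar) (hwstarper : IsPeriodic wstar)
    (hwstarpos : ∀ x, 0 < wstar x)
    (heigw : ∀ x, -(hbar ^ 2 / 2) * lap w x + hbar * dot P (gradient w x) + W x * w x
      = E * w x)
    (heigwstar : ∀ x, -(hbar ^ 2 / 2) * lap wstar x - hbar * dot P (gradient wstar x)
      + W x * wstar x = E * wstar x)
    (v vstar : En n → ℝ)
    (hv : v = fun x => -(hbar * Real.log (w x)))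
    (hvstar : vstar = fun x => hbar * Real.log (wstar x))
    (u : En n → ℝ) (hu : u = fun x => dot P x + (v x + vstar x) / 2) :
    ∀ x, dvg (fun y => (w y * wstar y) • gradient u y) x = 0 := by
  intro x
  have hdiv : dvg (fun y => (w y * wstar y) • gradient u y) x
      = wstar x * dot P (gradient w x) + w x * dot P (gradient wstar x)
        + hbar / 2 * (w x * lap wstar x - wstar x * lap w x) := by
    subst hu hv hvstar
    unfold dvg
    simp only [flux_apply hbar P (hw.differentiable (by simp)) (hwstar.differentiable (by simp))
      hwpos hwstarpos, pd_flux hbar _ hw hwstar]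
    simp only [dot, lap, gradient_apply_eq_pd, Finset.mul_sum, ← Finset.sum_add_distrib,
      ← Finset.sum_sub_distrib]
  rw [hdiv]
  refine (mul_eq_zero.mp ?_).resolve_left h_hbar.ne'
  linear_combination wstar x * heigw x - w x * heigwstar x
end
end
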